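/- Let K be a field, r ≥ 1 an integer, and f ∈ K[X] a polynomial. Let R₀ = K[x, y]/(y^r − f(x)) and let A be the localization of R₀ away from the image of y, so that y is invertible in A. Let Ω_{A/K} be the module of Kähler differentials of A over K with universal derivation D. Then for all integers i ≥ 1 and j, the identity (r·i·x^{i−1}·f(x) + (r − j)·x^i·f'(x)) · y^{−j} • D(x) = D(r · x^i · y^{r−j}) holds in Ω_{A/K}. In particular, for 1 ≤ j ≤ r, the element (r i x^{i−1} f(x) + (r−j) x^i f'(x)) y^{−j} D(x) is an exact differential. -/

import Mathlib

open Polynomial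

/-!
The logarithmic differential `u ↦ u⁻¹ • d u` of a derivation `d` turns products of units into sums,
so `d (u ^ n) = n u ^ n • dlog u` for every integer `n`. For `u ^ r = f(x)`, the case `n = r` reads
`r f(x) • dlog u = f'(x) • d x`, and this eliminates `dlog u` from the Leibniz expansion of
`d (r x ^ i u ^ (r - j))`.
-/

section LogarithmicDifferential

variable {R A M : Type*} [CommSemiring R] [CommRing A] [Algebra R A]
  [AddCommGroup M] [Module A M] [Module R M]

/-- The logarithmic differential `u ↦ u⁻¹ • d u` attached to a derivation `d`, as a homomorphism
from the group of units, written additively. -/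
def dlog (d : Derivation R A M) : Additive Aˣ →+ M :=
  AddMonoidHom.mk' (fun u ↦ u.toMul⁻¹ • d (u.toMul : A)) fun u v ↦ by
    simp only [toMul_add, Units.val_mul, d.leibniz, mul_inv, smul_add, Units.smul_def, smul_smul]
    rw [add_comm]
    congr 2
    · rw [mul_assoc, Units.inv_mul, mul_one]
    · rw [mul_right_comm, Units.inv_mul, one_mul]

theorem val_smul_dlog (d : Derivation R A M) (u : Aˣ) :
    (u : A) • dlog d (.ofMul u) = d (u : A) :=
  smul_inv_smul u (d (u : A))

theorem derivation_units_zpow (d : Derivation R A M) (u : Aˣ) (n : ℤ) :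
    d ((u ^ n : Aˣ) : A) = ((n : A) * ((u ^ n : Aˣ) : A)) • dlog d (.ofMul u) := by
  rw [← val_smul_dlog, ofMul_zpow, map_zsmul, ← Int.cast_smul_eq_zsmul A, smul_smul, mul_comm]

theorem derivation_units_pow (d : Derivation R A M) (u : Aˣ) (n : ℕ) :
    d ((u : A) ^ n) = ((n : A) * (u : A) ^ n) • dlog d (.ofMul u) := by
  simpa only [zpow_natCast, Units.val_pow_eq_pow_val, Int.cast_natCast]
    using derivation_units_zpow d u n

theorem stmt_8_general (d : Derivation R A M) {x g g' : A} {u : Aˣ} {r : ℕ}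
    (hu : (u : A) ^ r = g) (hg' : d g = g' • d x) (i : ℕ) (j : ℤ) :
    (((r : A) * (i : A) * x ^ (i - 1) * g + ((r : A) - (j : A)) * x ^ i * g') *
        ((u ^ (-j) : Aˣ) : A)) • d x =
      d ((r : A) * x ^ i * ((u ^ ((r : ℤ) - j) : Aˣ) : A)) := by
  have hzpow : ((u ^ ((r : ℤ) - j) : Aˣ) : A) = g * ((u ^ (-j) : Aˣ) : A) := by
    rw [sub_eq_add_neg, zpow_add, Units.val_mul, zpow_natCast, Units.val_pow_eq_pow_val, hu]
  have hdlog : ((r : A) * g) • dlog d (.ofMul u) = g' • d x := by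
    rw [← hg', ← hu, derivation_units_pow]
  have hdx : d ((r : A) * x ^ i) = ((r : A) * (i : A) * x ^ (i - 1)) • d x := by
    rw [d.leibniz, d.map_natCast, smul_zero, add_zero, d.leibniz_pow,
      ← Nat.cast_smul_eq_nsmul A, smul_smul, smul_smul, mul_assoc]
  have hdu : ((r : A) * x ^ i) • d ((u ^ ((r : ℤ) - j) : Aˣ) : A) =
      (((r : A) - j) * x ^ i * ((u ^ (-j) : Aˣ) : A) * g') • d x := by
    rw [mul_smul _ g', ← hdlog, derivation_units_zpow, hzpow, smul_smul, smul_smul]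
    congr 1
    push_cast
    ring
  rw [d.leibniz, hdu, hdx, hzpow, smul_smul, ← add_smul]
  congr 1
  ring

end LogarithmicDifferential

theorem derivation_algHom_apply_C {R A M : Type*} [CommSemiring R] [CommSemiring A] [Algebra R A]
    [AddCommMonoid M] [Module A M] [Module R M] (d : Derivation R A M)
    (φ : R[X][X] →ₐ[R] A) (f : R[X]) :
    d (φ (C f)) = φ (C (derivative f)) • d (φ (C X)) := by
  have hC (g : R[X]) : φ (C g) = aeval (φ (C X)) g := by
    simpa using (aeval_algHom_apply (φ.comp CAlgHom) X g).symm
  rw [hC f, hC (derivative f), d.map_aeval]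

/-- Let `K` be a field, `r ≥ 1`, `f ∈ K[X]`, `R₀ = K[x,y]/(y^r − f(x))` (presented by a
surjection `π` from `K[x][y]` with kernel generated by `y^r − f(x)`; here `y` is the outer
variable `X` and `x` is `C X`), and let `A` be the localization of `R₀` away from the image
of `y`, so that `y` is invertible in `A` (its powers given by a unit `u`). Then in the module
of Kähler differentials `Ω[A⁄K]` with universal derivation `D`, for all integers `i ≥ 1`
and `j`,
`(r·i·x^{i−1}·f(x) + (r − j)·x^i·f'(x)) · y^{−j} • D(x) = D(r·x^i·y^{r−j})`
(the reduction formula Red2); in particular the left-hand side is an exact differential. -/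
theorem stmt_8 (K R₀ A : Type*) [Field K] [CommRing R₀] [Algebra K R₀]
    [CommRing A] [Algebra R₀ A] [Algebra K A] [IsScalarTower K R₀ A]
    (r : ℕ) (hr : 1 ≤ r) (f : Polynomial K)
    (π : Polynomial (Polynomial K) →ₐ[K] R₀) (hπ : Function.Surjective π)
    (hker : RingHom.ker (π : Polynomial (Polynomial K) →+* R₀) =
      Ideal.span {(X : Polynomial (Polynomial K)) ^ r - C f})
    [IsLocalization.Away (π (X : Polynomial (Polynomial K))) A]
    (u : Aˣ) (hu : (u : A) = algebraMap R₀ A (π (X : Polynomial (Polynomial K)))) :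
    ∀ (i : ℕ), 1 ≤ i → ∀ (j : ℤ),
      ((((r : A) * (i : A) * algebraMap R₀ A (π (C (X : Polynomial K))) ^ (i - 1) *
              algebraMap R₀ A (π (C f))
            + ((r : A) - (j : A)) * algebraMap R₀ A (π (C (X : Polynomial K))) ^ i *
              algebraMap R₀ A (π (C (derivative f)))) * ((u ^ (-j) : Aˣ) : A)) •
          KaehlerDifferential.D K A (algebraMap R₀ A (π (C (X : Polynomial K))))) =
        KaehlerDifferential.D K A ((r : A) *
          algebraMap R₀ A (π (C (X : Polynomial K))) ^ i * ((u ^ ((r : ℤ) - j) : Aˣ) : A)) := by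
  have hrel : π (X ^ r) = π (C f) :=
    (RingHom.sub_mem_ker_iff (π : K[X][X] →+* R₀)).mp (hker ▸ Ideal.mem_span_singleton_self _)
  have hpow : (u : A) ^ r = algebraMap R₀ A (π (C f)) := by
    rw [hu, ← map_pow, ← map_pow, hrel]
  exact fun i _ j ↦ stmt_8_general _ hpow
    (derivation_algHom_apply_C _ ((IsScalarTower.toAlgHom K R₀ A).comp π) f) i j
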